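/- Let q be a prime power, F a finite field with q elements, and let M ⊆ F^q be the set of vectors whose q coordinates are pairwise distinct (injective tuples Fin q → F). Every point v ∈ M lies on exactly one affine line of F^q contained in M, namely the line {v + t•(1, 1, …, 1) : t ∈ F}; consequently the affine lines contained in M partition M. -/

import Mathlib

/-- A direction `d` such that every point of the line `{y + t • d}` has pairwise distinct
coordinates is constant. -/
theorem direction_eq_of_forall_injective {ι F : Type*} [Field F] {y d : ι → F}
    (h : ∀ t : F, Function.Injective (y + t • d)) (i j : ι) : d i = d j := by
  by_contra hij
  have hsub : d i - d j ≠ 0 := sub_ne_zero.mpr hij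
  refine hij (congrArg d (h (-(y i - y j) / (d i - d j)) ?_))
  simp only [Pi.add_apply, Pi.smul_apply, smul_eq_mul]
  field_simp
  ring

/-- Let `M ⊆ F^q` be the set of vectors with pairwise distinct coordinates
(injective tuples `Fin q → F`, where `q = |F|`). Every point `v ∈ M` lies on exactly one
affine line of `F^q` contained in `M`, namely the line `{v + t • (1,…,1) : t ∈ F}`;
consequently the affine lines contained in `M` partition `M`. -/
theorem unique_line_through_point_of_braid_complement
    (q : ℕ) (hq : IsPrimePow q)
    (F : Type) [Field F] [Fintype F] (hF : Fintype.card F = q)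
    (v : Fin q → F) (hv : Function.Injective v) :
    {z : Fin q → F | ∃ t : F, z = v + t • (1 : Fin q → F)} ⊆
        {w : Fin q → F | Function.Injective w} ∧
      v ∈ {z : Fin q → F | ∃ t : F, z = v + t • (1 : Fin q → F)} ∧
      ∀ l : Set (Fin q → F),
        (∃ (y d : Fin q → F), d ≠ 0 ∧ l = {z : Fin q → F | ∃ t : F, z = y + t • d}) →
        l ⊆ {w : Fin q → F | Function.Injective w} → v ∈ l →
          l = {z : Fin q → F | ∃ t : F, z = v + t • (1 : Fin q → F)} := by
  refine ⟨?_, ⟨0, by simp⟩, ?_⟩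
  · rintro _ ⟨t, rfl⟩ i j hij
    exact hv (by simpa using hij)
  · rintro _ ⟨y, d, hd, rfl⟩ hl ⟨s, rfl⟩
    obtain ⟨i, hi⟩ := Function.ne_iff.mp hd
    have hconst : d = d i • (1 : Fin q → F) := by
      ext j
      simpa using direction_eq_of_forall_injective (fun t => hl ⟨t, rfl⟩) j i
    replace hi : d i ≠ 0 := hi
    generalize d i = c at hconst hi
    subst hconst
    ext z
    constructor
    · rintro ⟨t, rfl⟩
      exact ⟨(t - s) * c, by ext j; simp; ring⟩
    · rintro ⟨t, rfl⟩
      exact ⟨s + t / c, by ext j; simp; field_simp; ring⟩
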